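/- Let (X,d) be a complete b-rectangular metric space with coefficient s ≥ 1, T : X → X a mapping, and φ : X → [0,∞) a lower semicontinuous function. Let ψ be an altering distance function and ϕ ∈ Φ_u. Suppose that for all x, y ∈ X, ψ(s²d(Tx,Ty) + φ(Tx) + φ(Ty)) ≤ ψ(M(x,y)) / (1 + ϕ(M(x,y))), where M(x,y) = max{d(x,y)+φ(x)+φ(y), d(x,Tx)+φ(x)+φ(Tx), d(y,Ty)+φ(y)+φ(Ty)}. Then T has a unique fixed point. -/

import Mathlib

/-!
Write `a n = d (xₙ, xₙ₊₁) + φ xₙ + φ xₙ₊₁` for the Picard iterates `xₙ₊₁ = T xₙ`. The hypothesis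
has the form `ψ t ≤ ψ M / (1 + ϕ M)`, a relation (`Dom`) which is closed under limits and forces
`t < M` unless `t = M = 0`. Applied to consecutive iterates it makes `a` antitone, and its limit
`r` satisfies `Dom r r`, so `r = 0` (`tendsto_step`). Hence `φ xₙ → 0`, and the same argument for
`max (d (xₙ, xₙ₊₂) + φ xₙ + φ xₙ₊₂) (a n)` gives `d (xₙ, xₙ₊₂) → 0` (`tendsto_two_step`).

If no two consecutive iterates agree, the iterates are pairwise distinct because `a` is strictly
decreasing, so the rectangular inequality is available along the orbit. Smallness of one-step
and two-step distances then yields the Cauchy property (`picard_cauchy`): with all these small,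
`d (xₙ₊₁, xₘ) < ε` bounds `M (xₙ, xₘ)` by a little more than `s ε ≤ s² ε`, which is incompatible
with `ε ≤ d (xₙ₊₁, xₘ₊₁)`. Here the factor `s²` in the hypothesis pays for the factor `s` in the
rectangular inequality.

At the limit `z` lower semicontinuity gives `φ z = 0`, and the hypothesis for `(xₙ, z)`
passes to the limit as `Dom δ δ` with `δ = d (z, T z) + φ (T z)`, so `T z = z`
(`fixed_of_tendsto`).
-/

open Filter Topology

/-- A b-rectangular metric space with coefficient `s`. -/
structure RectBMetric (X : Type*) (s : ℝ) where
  d : X → X → ℝ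
  nonneg : ∀ x y, 0 ≤ d x y
  eq_iff : ∀ x y, d x y = 0 ↔ x = y
  symm : ∀ x y, d x y = d y x
  rect : ∀ x y u v : X, u ≠ v → u ≠ x → u ≠ y → v ≠ x → v ≠ y →
    d x y ≤ s * (d x u + d u v + d v y)

namespace RectBMetric

variable {X : Type*} {s : ℝ}

/-- Convergence of a sequence in a b-rectangular metric space. -/
def TendstoSeq (B : RectBMetric X s) (x : ℕ → X) (l : X) : Prop :=
  Filter.Tendsto (fun n => B.d (x n) l) Filter.atTop (nhds 0)

/-- Cauchy sequences in a b-rectangular metric space. -/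
def IsCauchySeq (B : RectBMetric X s) (x : ℕ → X) : Prop :=
  ∀ ε : ℝ, 0 < ε → ∃ N : ℕ, ∀ m ≥ N, ∀ n ≥ N, B.d (x m) (x n) < ε

/-- Completeness of a b-rectangular metric space. -/
def Complete (B : RectBMetric X s) : Prop :=
  ∀ x : ℕ → X, B.IsCauchySeq x → ∃ l, B.TendstoSeq x l

/-- Lower semicontinuity of `φ : X → ℝ` with respect to a b-rectangular metric. -/
def LSC (B : RectBMetric X s) (φ : X → ℝ) : Prop :=
  ∀ (x : ℕ → X) (l : X), B.TendstoSeq x l →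
    φ l ≤ Filter.liminf (fun n => φ (x n)) Filter.atTop

/-- The quantity `M(x,y,d,T,φ)`. -/
def Mfun (B : RectBMetric X s) (T : X → X) (φ : X → ℝ) (x y : X) : ℝ :=
  max (B.d x y + φ x + φ y)
    (max (B.d x (T x) + φ x + φ (T x)) (B.d y (T y) + φ y + φ (T y)))

end RectBMetric

/-- An altering distance function on `[0,∞)`. -/
def AlteringDistance (ψ : ℝ → ℝ) : Prop :=
  ContinuousOn ψ (Set.Ici 0) ∧ MonotoneOn ψ (Set.Ici 0) ∧
    (∀ t ≥ (0:ℝ), 0 ≤ ψ t) ∧ (∀ t ≥ (0:ℝ), (ψ t = 0 ↔ t = 0))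

/-- The class `Φᵤ`: continuous `ϕ : [0,∞) → [0,∞)` with `ϕ(t) > 0` for `t > 0`, `ϕ(0) ≥ 0`. -/
def PhiU (ϕ : ℝ → ℝ) : Prop :=
  ContinuousOn ϕ (Set.Ici 0) ∧ (∀ t : ℝ, 0 < t → 0 < ϕ t) ∧ 0 ≤ ϕ 0

/-- C-class functions. -/
def CClass (F : ℝ → ℝ → ℝ) : Prop :=
  ContinuousOn (fun p : ℝ × ℝ => F p.1 p.2) (Set.Ici 0 ×ˢ Set.Ici 0) ∧
    (∀ a b : ℝ, 0 ≤ a → 0 ≤ b → F a b ≤ a) ∧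
    (∀ a b : ℝ, 0 ≤ a → 0 ≤ b → F a b = a → a = 0 ∨ b = 0)

/-- The relation `ψ t ≤ ψ M / (1 + ϕ M)` between `t` and `M` imposed by the contraction. -/
def Dom (ψ ϕ : ℝ → ℝ) (t M : ℝ) : Prop := ψ t ≤ ψ M / (1 + ϕ M)

section Dom

variable {ψ ϕ : ℝ → ℝ}

lemma PhiU.nonneg (hϕ : PhiU ϕ) {t : ℝ} (ht : 0 ≤ t) : 0 ≤ ϕ t := by
  rcases ht.eq_or_lt with h | h
  · rw [← h]; exact hϕ.2.2
  · exact (hϕ.2.1 t h).le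

lemma AlteringDistance.pos (hψ : AlteringDistance ψ) {t : ℝ} (ht : 0 < t) : 0 < ψ t :=
  lt_of_le_of_ne (hψ.2.2.1 t ht.le) fun h => ht.ne' ((hψ.2.2.2 t ht.le).1 h.symm)

lemma Dom.lt_or_zero (hψ : AlteringDistance ψ) (hϕ : PhiU ϕ) {t M : ℝ} (ht : 0 ≤ t)
    (hM : 0 ≤ M) (h : Dom ψ ϕ t M) : t < M ∨ (t = 0 ∧ M = 0) := by
  by_contra! hc
  obtain ⟨hMt, hc⟩ := hc
  rcases hM.eq_or_lt with hM0 | hM0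
  · subst hM0
    have h0 : ψ 0 = 0 := (hψ.2.2.2 0 le_rfl).2 rfl
    have h1 : ψ t ≤ 0 := by simpa [Dom, h0] using h
    exact hc ((hψ.2.2.2 t ht).1 (le_antisymm h1 (hψ.2.2.1 t ht))) rfl
  · have h1 : ψ M ≤ ψ t := hψ.2.1 hM ht hMt
    have h2 : ψ M / (1 + ϕ M) < ψ M :=
      div_lt_self (hψ.pos hM0) (by linarith [hϕ.2.1 M hM0])
    exact absurd (h1.trans h) (not_le.2 h2)

lemma Dom.le (hψ : AlteringDistance ψ) (hϕ : PhiU ϕ) {t M : ℝ} (ht : 0 ≤ t)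
    (hM : 0 ≤ M) (h : Dom ψ ϕ t M) : t ≤ M := by
  rcases h.lt_or_zero hψ hϕ ht hM with h | ⟨h, h'⟩
  · exact h.le
  · rw [h, h']

lemma Dom.mono_left (hψ : AlteringDistance ψ) {t t' M : ℝ} (ht : 0 ≤ t') (htt : t' ≤ t)
    (h : Dom ψ ϕ t M) : Dom ψ ϕ t' M :=
  (hψ.2.1 ht (ht.trans htt : (0:ℝ) ≤ t) htt).trans h

lemma Dom.of_tendsto (hψ : AlteringDistance ψ) (hϕ : PhiU ϕ) {t M : ℕ → ℝ} {t₀ M₀ : ℝ}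
    (ht : ∀ n, 0 ≤ t n) (hM : ∀ n, 0 ≤ M n) (h : ∀ᶠ n in atTop, Dom ψ ϕ (t n) (M n))
    (htt : Tendsto t atTop (𝓝 t₀)) (hMM : Tendsto M atTop (𝓝 M₀)) : Dom ψ ϕ t₀ M₀ := by
  have ht0 : 0 ≤ t₀ := ge_of_tendsto' htt ht
  have hM0 : 0 ≤ M₀ := ge_of_tendsto' hMM hM
  have ht' : Tendsto t atTop (𝓝[Set.Ici 0] t₀) :=
    tendsto_nhdsWithin_iff.2 ⟨htt, Eventually.of_forall ht⟩
  have hM' : Tendsto M atTop (𝓝[Set.Ici 0] M₀) :=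
    tendsto_nhdsWithin_iff.2 ⟨hMM, Eventually.of_forall hM⟩
  have h1 : Tendsto (fun n => ψ (t n)) atTop (𝓝 (ψ t₀)) := (hψ.1 t₀ ht0).tendsto.comp ht'
  have h2 : Tendsto (fun n => ψ (M n)) atTop (𝓝 (ψ M₀)) := (hψ.1 M₀ hM0).tendsto.comp hM'
  have h3 : Tendsto (fun n => ϕ (M n)) atTop (𝓝 (ϕ M₀)) := (hϕ.1 M₀ hM0).tendsto.comp hM'
  exact le_of_tendsto_of_tendsto h1
    (h2.div (h3.const_add 1) (by linarith [hϕ.nonneg hM0])) h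

lemma Dom.self_eq_zero (hψ : AlteringDistance ψ) (hϕ : PhiU ϕ) {t : ℝ} (ht : 0 ≤ t)
    (h : Dom ψ ϕ t t) : t = 0 := by
  rcases h.lt_or_zero hψ hϕ ht ht with h | h
  · exact absurd h (lt_irrefl _)
  · exact h.1

/-- A uniform gap: `Dom E M` fails not only for `M ≤ E` but also for `M` slightly above `E`. -/
lemma exists_gap (hψ : AlteringDistance ψ) (hϕ : PhiU ϕ) {E : ℝ} (hE : 0 < E) :
    ∃ δ > 0, ∀ M, 0 ≤ M → M < E + δ → ¬ Dom ψ ϕ E M := by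
  by_contra! hc
  have hδ : ∀ n : ℕ, ∃ M, 0 ≤ M ∧ M < E + 1 / ((n : ℝ) + 1) ∧ Dom ψ ϕ E M := fun n =>
    hc _ (by positivity)
  choose M hM0 hM1 hM2 using hδ
  have hEM : ∀ n, E ≤ M n := fun n => (hM2 n).le hψ hϕ hE.le (hM0 n)
  have hlim : Tendsto M atTop (𝓝 E) := by
    refine tendsto_of_tendsto_of_tendsto_of_le_of_le tendsto_const_nhds ?_ hEM
      (fun n => (hM1 n).le)
    simpa using tendsto_one_div_add_atTop_nhds_zero_nat.const_add E
  have := Dom.of_tendsto hψ hϕ (fun _ => hE.le) hM0 (Eventually.of_forall hM2)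
    tendsto_const_nhds hlim
  exact hE.ne' (this.self_eq_zero hψ hϕ hE.le)

/-- An antitone nonnegative sequence tends to `0` as soon as a hypothetical positive limit `r`
would force `Dom` between consecutive terms, since then `Dom r r`. -/
lemma tendsto_zero_of_dom (hψ : AlteringDistance ψ) (hϕ : PhiU ϕ) {c : ℕ → ℝ}
    (h0 : ∀ n, 0 ≤ c n) (hc : Antitone c)
    (h : ∀ r > 0, (∀ n, r ≤ c n) → ∀ᶠ n in atTop, Dom ψ ϕ (c (n + 1)) (c n)) :
    Tendsto c atTop (𝓝 0) := by
  have hb : BddBelow (Set.range c) := ⟨0, by rintro _ ⟨n, rfl⟩; exact h0 n⟩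
  have hl := tendsto_atTop_ciInf hc hb
  set r := ⨅ n, c n with hr
  have hr0 : 0 ≤ r := ge_of_tendsto' hl h0
  rcases hr0.eq_or_lt with h1 | h1
  · rwa [← h1] at hl
  · have hD := Dom.of_tendsto hψ hϕ (fun n => h0 (n + 1)) h0
      (h r h1 fun n => ciInf_le hb n) ((tendsto_add_atTop_iff_nat 1).2 hl) hl
    exact absurd (hD.self_eq_zero hψ hϕ hr0) h1.ne'

end Dom

namespace RectBMetric

variable {X : Type*} {s : ℝ} {B : RectBMetric X s} {T : X → X} {φ : X → ℝ} {ψ ϕ : ℝ → ℝ}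

/-- The distance `d` perturbed by `φ` at both end points. -/
def pd (B : RectBMetric X s) (φ : X → ℝ) (x y : X) : ℝ := B.d x y + φ x + φ y

lemma pd_nonneg (hφ0 : ∀ x, 0 ≤ φ x) (x y : X) : 0 ≤ B.pd φ x y := by
  have := B.nonneg x y
  have := hφ0 x
  have := hφ0 y
  unfold pd; linarith

lemma d_le_pd (hφ0 : ∀ x, 0 ≤ φ x) (x y : X) : B.d x y ≤ B.pd φ x y := by
  have := hφ0 x
  have := hφ0 y
  unfold pd; linarith

lemma Mfun_eq (x y : X) :
    B.Mfun T φ x y = max (B.pd φ x y) (max (B.pd φ x (T x)) (B.pd φ y (T y))) := rfl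

lemma Mfun_nonneg (hφ0 : ∀ x, 0 ≤ φ x) (x y : X) : 0 ≤ B.Mfun T φ x y :=
  (pd_nonneg hφ0 x y).trans (le_max_left _ _)

lemma d_self (x : X) : B.d x x = 0 := (B.eq_iff x x).2 rfl

lemma d_pos {x y : X} (h : x ≠ y) : 0 < B.d x y :=
  lt_of_le_of_ne (B.nonneg x y) fun h' => h ((B.eq_iff x y).1 h'.symm)

/-- The contraction hypothesis with the factor `s ^ 2` dropped. -/
lemma dom_pd (hs : 1 ≤ s) (hφ0 : ∀ x, 0 ≤ φ x) (hψ : AlteringDistance ψ)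
    (hcontr : ∀ x y : X, Dom ψ ϕ (s ^ 2 * B.d (T x) (T y) + φ (T x) + φ (T y))
      (B.Mfun T φ x y)) (x y : X) :
    Dom ψ ϕ (B.pd φ (T x) (T y)) (B.Mfun T φ x y) := by
  refine (hcontr x y).mono_left hψ (pd_nonneg hφ0 _ _) ?_
  have : B.d (T x) (T y) ≤ s ^ 2 * B.d (T x) (T y) :=
    le_mul_of_one_le_left (B.nonneg _ _) (one_le_pow₀ hs)
  unfold pd; linarith

section Picard

variable {x : ℕ → X}

lemma dom_step (hs : 1 ≤ s) (hφ0 : ∀ x, 0 ≤ φ x) (hψ : AlteringDistance ψ) (hϕ : PhiU ϕ)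
    (hcontr : ∀ x y : X, Dom ψ ϕ (s ^ 2 * B.d (T x) (T y) + φ (T x) + φ (T y))
      (B.Mfun T φ x y)) (hx : ∀ n, x (n + 1) = T (x n)) (n : ℕ) :
    Dom ψ ϕ (B.pd φ (x (n + 1)) (x (n + 2))) (B.pd φ (x n) (x (n + 1))) := by
  have h := dom_pd hs hφ0 hψ hcontr (x n) (x (n + 1))
  rw [Mfun_eq, ← hx, ← hx, ← max_assoc, max_self] at h
  rcases le_total (B.pd φ (x (n + 1)) (x (n + 2))) (B.pd φ (x n) (x (n + 1))) with h1 | h1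
  · rwa [max_eq_left h1] at h
  · -- the maximum cannot be attained at the later step unless both steps vanish
    rw [max_eq_right h1] at h
    have h2 := h.self_eq_zero hψ hϕ (pd_nonneg hφ0 _ _)
    have h3 : B.pd φ (x n) (x (n + 1)) = 0 :=
      le_antisymm (h1.trans h2.le) (pd_nonneg hφ0 _ _)
    rw [h2] at h
    rwa [h2, h3]

lemma antitone_step (hs : 1 ≤ s) (hφ0 : ∀ x, 0 ≤ φ x) (hψ : AlteringDistance ψ) (hϕ : PhiU ϕ)
    (hcontr : ∀ x y : X, Dom ψ ϕ (s ^ 2 * B.d (T x) (T y) + φ (T x) + φ (T y))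
      (B.Mfun T φ x y)) (hx : ∀ n, x (n + 1) = T (x n)) :
    Antitone fun n => B.pd φ (x n) (x (n + 1)) :=
  antitone_nat_of_succ_le fun n => (dom_step hs hφ0 hψ hϕ hcontr hx n).le hψ hϕ
    (pd_nonneg hφ0 _ _) (pd_nonneg hφ0 _ _)

lemma tendsto_step (hs : 1 ≤ s) (hφ0 : ∀ x, 0 ≤ φ x) (hψ : AlteringDistance ψ) (hϕ : PhiU ϕ)
    (hcontr : ∀ x y : X, Dom ψ ϕ (s ^ 2 * B.d (T x) (T y) + φ (T x) + φ (T y))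
      (B.Mfun T φ x y)) (hx : ∀ n, x (n + 1) = T (x n)) :
    Tendsto (fun n => B.pd φ (x n) (x (n + 1))) atTop (𝓝 0) :=
  tendsto_zero_of_dom hψ hϕ (fun _ => pd_nonneg hφ0 _ _)
    (antitone_step hs hφ0 hψ hϕ hcontr hx)
    fun _ _ _ => Eventually.of_forall (dom_step hs hφ0 hψ hϕ hcontr hx)

lemma tendsto_phi (hs : 1 ≤ s) (hφ0 : ∀ x, 0 ≤ φ x) (hψ : AlteringDistance ψ) (hϕ : PhiU ϕ)
    (hcontr : ∀ x y : X, Dom ψ ϕ (s ^ 2 * B.d (T x) (T y) + φ (T x) + φ (T y))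
      (B.Mfun T φ x y)) (hx : ∀ n, x (n + 1) = T (x n)) :
    Tendsto (fun n => φ (x n)) atTop (𝓝 0) := by
  refine squeeze_zero (fun n => hφ0 _) (fun n => ?_) (tendsto_step hs hφ0 hψ hϕ hcontr hx)
  have := B.nonneg (x n) (x (n + 1))
  have := hφ0 (x (n + 1))
  unfold pd; linarith

lemma tendsto_two_step (hs : 1 ≤ s) (hφ0 : ∀ x, 0 ≤ φ x) (hψ : AlteringDistance ψ)
    (hϕ : PhiU ϕ)
    (hcontr : ∀ x y : X, Dom ψ ϕ (s ^ 2 * B.d (T x) (T y) + φ (T x) + φ (T y))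
      (B.Mfun T φ x y)) (hx : ∀ n, x (n + 1) = T (x n)) :
    Tendsto (fun n => B.pd φ (x n) (x (n + 2))) atTop (𝓝 0) := by
  have ha := antitone_step hs hφ0 hψ hϕ hcontr hx
  have hD : ∀ n, Dom ψ ϕ (B.pd φ (x (n + 1)) (x (n + 3)))
      (max (B.pd φ (x n) (x (n + 2))) (B.pd φ (x n) (x (n + 1)))) := by
    intro n
    have h := dom_pd hs hφ0 hψ hcontr (x n) (x (n + 2))
    have h1 : B.pd φ (x (n + 2)) (x (n + 3)) ≤ B.pd φ (x n) (x (n + 1)) :=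
      ha (by omega : n ≤ n + 2)
    rwa [Mfun_eq, ← hx, ← hx, max_eq_left h1] at h
  have h0 : ∀ n, 0 ≤ max (B.pd φ (x n) (x (n + 2))) (B.pd φ (x n) (x (n + 1))) :=
    fun n => (pd_nonneg hφ0 _ _).trans (le_max_left _ _)
  refine squeeze_zero (fun n => pd_nonneg hφ0 _ _) (fun n => le_max_left _ _)
    (tendsto_zero_of_dom (c := fun n => max (B.pd φ (x n) (x (n + 2)))
      (B.pd φ (x n) (x (n + 1)))) hψ hϕ h0 ?_ ?_)
  · refine antitone_nat_of_succ_le fun n => max_le ?_ ?_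
    · exact (hD n).le hψ hϕ (pd_nonneg hφ0 _ _) (h0 n)
    · exact (ha (Nat.le_succ n)).trans (le_max_right _ _)
  · intro r hr hrc
    -- once the one-step terms are below `r`, the maximum is the two-step term
    filter_upwards [((tendsto_add_atTop_iff_nat 1).2
      (tendsto_step hs hφ0 hψ hϕ hcontr hx)).eventually (gt_mem_nhds hr)] with n hn
    have h1 : B.pd φ (x (n + 1)) (x (n + 2)) ≤ B.pd φ (x (n + 1)) (x (n + 3)) := by
      rcases le_max_iff.1 (hrc (n + 1)) with h | h
      · exact hn.le.trans h
      · exact absurd hn (not_lt.2 h)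
    show Dom ψ ϕ (max (B.pd φ (x (n + 1)) (x (n + 3))) (B.pd φ (x (n + 1)) (x (n + 2)))) _
    rw [max_eq_left h1]
    exact hD n

lemma picard_injective (hs : 1 ≤ s) (hφ0 : ∀ x, 0 ≤ φ x) (hψ : AlteringDistance ψ)
    (hϕ : PhiU ϕ)
    (hcontr : ∀ x y : X, Dom ψ ϕ (s ^ 2 * B.d (T x) (T y) + φ (T x) + φ (T y))
      (B.Mfun T φ x y)) (hx : ∀ n, x (n + 1) = T (x n)) (hne : ∀ n, x n ≠ x (n + 1)) :
    Function.Injective x := by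
  have ha : StrictAnti fun n => B.pd φ (x n) (x (n + 1)) := by
    refine strictAnti_nat_of_succ_lt fun n => ?_
    rcases (dom_step hs hφ0 hψ hϕ hcontr hx n).lt_or_zero hψ hϕ
      (pd_nonneg hφ0 _ _) (pd_nonneg hφ0 _ _) with h | h
    · exact h
    · exact absurd h.2 ((d_pos (hne n)).trans_le (d_le_pd hφ0 _ _)).ne'
  intro m n h
  apply ha.injective
  simp only [hx, h]

/-- Along a tail of the orbit, `d (xₙ₊₁, xₙ₊₂₊ₖ) < ε` is proved by induction on `k`. -/
lemma picard_cauchy (hs : 1 ≤ s) (hφ0 : ∀ x, 0 ≤ φ x) (hψ : AlteringDistance ψ)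
    (hϕ : PhiU ϕ)
    (hcontr : ∀ x y : X, Dom ψ ϕ (s ^ 2 * B.d (T x) (T y) + φ (T x) + φ (T y))
      (B.Mfun T φ x y)) (hx : ∀ n, x (n + 1) = T (x n)) (hne : ∀ n, x n ≠ x (n + 1)) :
    B.IsCauchySeq x := by
  have hinj := picard_injective hs hφ0 hψ hϕ hcontr hx hne
  have hs0 : 0 < s := by linarith
  intro ε hε
  obtain ⟨δ, hδ, hgap⟩ := exists_gap hψ hϕ (E := s ^ 2 * ε) (by positivity)
  -- `η` makes `s (ε + 2 η) + 2 η < s² ε + δ`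
  obtain ⟨η, hη, hηε, hηδ⟩ : ∃ η > 0, η ≤ ε ∧ (2 * s + 2) * η < δ := by
    refine ⟨min ε (δ / (2 * (2 * s + 2))), by positivity, min_le_left _ _, ?_⟩
    calc (2 * s + 2) * min ε (δ / (2 * (2 * s + 2)))
        ≤ (2 * s + 2) * (δ / (2 * (2 * s + 2))) := by gcongr; exact min_le_right _ _
      _ = δ / 2 := by field_simp
      _ < δ := by linarith
  have hsη : η ≤ s * η := le_mul_of_one_le_left hη.le hs
  have hsε : s * ε ≤ s ^ 2 * ε := by gcongr; exact le_self_pow₀ hs two_ne_zero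
  have hε2 : 0 < s * ε := by positivity
  obtain ⟨N, hN⟩ := eventually_atTop.1
    (((tendsto_step hs hφ0 hψ hϕ hcontr hx).eventually (gt_mem_nhds hη)).and
      (((tendsto_two_step hs hφ0 hψ hϕ hcontr hx).eventually (gt_mem_nhds hη)).and
      ((tendsto_phi hs hφ0 hψ hϕ hcontr hx).eventually (gt_mem_nhds hη))))
  have key : ∀ n ≥ N, ∀ k, B.d (x (n + 1)) (x (n + 2 + k)) < ε := by
    intro n hn k
    induction k with
    | zero => exact ((d_le_pd hφ0 _ _).trans_lt (hN (n + 1) (by omega)).1).trans_le hηε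
    | succ k ih =>
      by_contra! hge
      have hdist : B.d (x n) (x (n + 2 + k)) < s * (ε + 2 * η) := by
        have h2 : B.d (x n) (x (n + 2)) < η := (d_le_pd hφ0 _ _).trans_lt (hN n hn).2.1
        rcases Nat.eq_zero_or_pos k with rfl | hk
        · simp only [Nat.add_zero]; linarith
        · have h1 : B.d (x (n + 2)) (x (n + 1)) < η := by
            rw [B.symm]; exact (d_le_pd hφ0 _ _).trans_lt (hN (n + 1) (by omega)).1
          refine (B.rect (x n) (x (n + 2 + k)) (x (n + 2)) (x (n + 1))
            (hinj.ne (by omega)) (hinj.ne (by omega)) (hinj.ne (by omega))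
            (hinj.ne (by omega)) (hinj.ne (by omega))).trans_lt ?_
          exact mul_lt_mul_of_pos_left (by linarith) hs0
      refine hgap (B.Mfun T φ (x n) (x (n + 2 + k))) (Mfun_nonneg hφ0 _ _) ?_
        ((hcontr (x n) (x (n + 2 + k))).mono_left hψ (by positivity) ?_)
      · rw [Mfun_eq, ← hx, ← hx]
        have h1 := (hN n hn).2.2
        have h2 := (hN (n + 2 + k) (by omega)).2.2
        have h3 := (hN n hn).1
        have h4 := (hN (n + 2 + k) (by omega)).1
        refine max_lt ?_ (max_lt ?_ ?_)
        · unfold pd; linarith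
        · linarith
        · linarith
      · rw [← hx, ← hx]
        have h1 : s ^ 2 * ε ≤ s ^ 2 * B.d (x (n + 1)) (x (n + 2 + k + 1)) := by gcongr; exact hge
        have := hφ0 (x (n + 1))
        have := hφ0 (x (n + 2 + k + 1))
        linarith
  have key' : ∀ m n, N + 1 ≤ m → m < n → B.d (x m) (x n) < ε := by
    intro m n hm hmn
    have := key (m - 1) (by omega) (n - m - 1)
    rwa [show m - 1 + 1 = m by omega, show m - 1 + 2 + (n - m - 1) = n by omega] at this
  refine ⟨N + 1, fun m hm n hn => ?_⟩
  rcases lt_trichotomy m n with h | rfl | h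
  · exact key' m n hm h
  · rwa [d_self]
  · rw [B.symm]; exact key' n m hn h

lemma fixed_of_tendsto (hs : 1 ≤ s) (hφ0 : ∀ x, 0 ≤ φ x) (hφ : B.LSC φ)
    (hψ : AlteringDistance ψ) (hϕ : PhiU ϕ)
    (hcontr : ∀ x y : X, Dom ψ ϕ (s ^ 2 * B.d (T x) (T y) + φ (T x) + φ (T y))
      (B.Mfun T φ x y)) (hx : ∀ n, x (n + 1) = T (x n)) (hne : ∀ n, x n ≠ x (n + 1))
    {z : X} (hz : B.TendstoSeq x z) : T z = z := by
  have hinj := picard_injective hs hφ0 hψ hϕ hcontr hx hne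
  have hs0 : 0 < s := by linarith
  have hphi := tendsto_phi hs hφ0 hψ hϕ hcontr hx
  have hstep := tendsto_step hs hφ0 hψ hϕ hcontr hx
  have hφz : φ z = 0 := le_antisymm ((hφ x z hz).trans hphi.liminf_eq.le) (hφ0 z)
  by_contra hTz
  have hδ : 0 < B.pd φ z (T z) := (d_pos (Ne.symm hTz)).trans_le (d_le_pd hφ0 _ _)
  -- an injective sequence avoids the points `z` and `T z` eventually
  have hav : ∀ y : X, ∀ᶠ n in atTop, x n ≠ y := fun y =>
    (hinj.tendsto_cofinite.eventually (eventually_cofinite_ne y)).filter_mono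
      Nat.cofinite_eq_atTop.ge
  have hM : Tendsto (fun n => B.Mfun T φ (x n) z) atTop (𝓝 (B.pd φ z (T z))) := by
    have h1 : Tendsto (fun n => B.pd φ (x n) z) atTop (𝓝 0) := by
      have := (Tendsto.add hz hphi).add_const (φ z)
      simpa [pd, hφz] using this
    have h2 := h1.max (hstep.max (tendsto_const_nhds (x := B.pd φ z (T z))))
    rw [max_eq_right hδ.le, max_eq_right hδ.le] at h2
    simpa only [Mfun_eq, ← hx] using h2
  have ht : Tendsto (fun n => max 0 (B.pd φ z (T z) -
      s ^ 2 * (B.d (x n) z + B.pd φ (x n) (x (n + 1))))) atTop (𝓝 (B.pd φ z (T z))) := by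
    have h := (tendsto_const_nhds (x := (0:ℝ))).max
      (((Tendsto.add hz hstep).const_mul (s ^ 2)).const_sub (B.pd φ z (T z)))
    simpa [max_eq_right hδ.le] using h
  have hD := Dom.of_tendsto hψ hϕ (fun n => le_max_left _ _) (fun n => Mfun_nonneg hφ0 _ _)
    ?_ ht hM
  · exact hδ.ne' (hD.self_eq_zero hψ hϕ hδ.le)
  · filter_upwards [hav z, hav (T z), (tendsto_add_atTop_nat 1).eventually (hav z),
      (tendsto_add_atTop_nat 1).eventually (hav (T z))] with n h1 h2 h3 h4
    refine (hcontr (x n) z).mono_left hψ (le_max_left _ _) (max_le ?_ ?_)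
    · have := B.nonneg (T (x n)) (T z)
      have := hφ0 (T (x n))
      have := hφ0 (T z)
      positivity
    · rw [← hx]
      have hr := B.rect z (T z) (x n) (x (n + 1)) (hne n) h1 h2 h3 h4
      rw [B.symm z (x n)] at hr
      have hp := d_le_pd (B := B) hφ0 (x n) (x (n + 1))
      have hd : B.d z (T z) ≤ s * B.d z (T z) := le_mul_of_one_le_left (B.nonneg _ _) hs
      have hr2 : s * B.d z (T z) ≤ s ^ 2 * (B.d (x n) z + B.pd φ (x n) (x (n + 1)))
          + s ^ 2 * B.d (x (n + 1)) (T z) := by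
        calc s * B.d z (T z)
            ≤ s * (s * (B.d (x n) z + B.d (x n) (x (n + 1)) + B.d (x (n + 1)) (T z))) := by
              gcongr
          _ ≤ s * (s * (B.d (x n) z + B.pd φ (x n) (x (n + 1)) + B.d (x (n + 1)) (T z))) := by
              gcongr
          _ = _ := by ring
      have := hφ0 (x (n + 1))
      have hpd : B.pd φ z (T z) = B.d z (T z) + φ (T z) := by simp [pd, hφz]
      linarith

end Picard

lemma fixed_unique (hs : 1 ≤ s) (hφ0 : ∀ x, 0 ≤ φ x) (hψ : AlteringDistance ψ) (hϕ : PhiU ϕ)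
    (hcontr : ∀ x y : X, Dom ψ ϕ (s ^ 2 * B.d (T x) (T y) + φ (T x) + φ (T y))
      (B.Mfun T φ x y)) {z w : X} (hz : T z = z) (hw : T w = w) : z = w := by
  have hfix : ∀ y, T y = y → φ y = 0 := by
    intro y hy
    have h := dom_pd hs hφ0 hψ hcontr y y
    simp only [Mfun_eq, hy, max_self] at h
    have h0 := h.self_eq_zero hψ hϕ (pd_nonneg hφ0 _ _)
    simp only [pd, d_self] at h0
    linarith
  have h := dom_pd hs hφ0 hψ hcontr z w
  simp only [Mfun_eq, hz, hw, pd, d_self, hfix z hz, hfix w hw, add_zero, max_self,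
    max_eq_left (B.nonneg z w)] at h
  exact (B.eq_iff z w).1 (h.self_eq_zero hψ hϕ (B.nonneg z w))

end RectBMetric

theorem stmt14 {X : Type*} [Nonempty X] {s : ℝ} (hs : 1 ≤ s) (B : RectBMetric X s)
    (hcomp : B.Complete) (T : X → X) (φ : X → ℝ) (hφ0 : ∀ x, 0 ≤ φ x)
    (hφ : B.LSC φ) (ψ ϕ : ℝ → ℝ) (hψ : AlteringDistance ψ) (hϕ : PhiU ϕ)
    (hcontr : ∀ x y : X,
      ψ (s ^ 2 * B.d (T x) (T y) + φ (T x) + φ (T y)) ≤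
        ψ (B.Mfun T φ x y) / (1 + ϕ (B.Mfun T φ x y))) :
    ∃! z : X, T z = z := by
  have hdom : ∀ x y : X, Dom ψ ϕ (s ^ 2 * B.d (T x) (T y) + φ (T x) + φ (T y))
      (B.Mfun T φ x y) := hcontr
  obtain ⟨z, hz⟩ : ∃ z, T z = z := by
    obtain ⟨x₀⟩ := ‹Nonempty X›
    have hx : ∀ n, T^[n + 1] x₀ = T (T^[n] x₀) := fun n => Function.iterate_succ_apply' T n x₀
    by_cases hne : ∀ n, T^[n] x₀ ≠ T^[n + 1] x₀
    · obtain ⟨z, hz⟩ := hcomp _ (RectBMetric.picard_cauchy (x := fun n => T^[n] x₀)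
        hs hφ0 hψ hϕ hdom hx hne)
      exact ⟨z, RectBMetric.fixed_of_tendsto hs hφ0 hφ hψ hϕ hdom hx hne hz⟩
    · push Not at hne
      obtain ⟨n, hn⟩ := hne
      exact ⟨T^[n] x₀, by rw [← hx, ← hn]⟩
  exact ⟨z, hz, fun w hw => RectBMetric.fixed_unique hs hφ0 hψ hϕ hdom hw hz⟩
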